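/- For every θ, φ ∈ (0, π/2) there is a constant c = c(θ, φ) > 0 such that ‖T_x(n, m; i)‖ ≤ c for all n, m ∈ ℤ and all x ∈ X_TM, where i is the imaginary unit. -/

import Mathlib

/-- The Thue–Morse sequence: the number of 1 digits in the binary expansion, mod 2. -/
def thueMorse (n : ℕ) : ℕ := (Nat.digits 2 n).sum % 2

/-- Membership in the Thue–Morse subshift: every finite subword of `x`
occurs as a subword of the Thue–Morse sequence. -/
def MemTMSubshift (x : ℤ → ℕ) : Prop :=
  ∀ (m : ℤ) (k : ℕ), ∃ M : ℕ, ∀ j ≤ k, x (m + j) = thueMorse (M + j)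

/-- The matrix `A_γ(z) = sec γ · [[z⁻¹, -sin γ], [-sin γ, z]]`. -/
noncomputable def Amat (γ : ℝ) (z : ℂ) : Matrix (Fin 2) (Fin 2) ℂ :=
  ((Real.cos γ)⁻¹ : ℂ) • !![z⁻¹, -(Real.sin γ : ℂ); -(Real.sin γ : ℂ), z]

/-- The one-step transfer matrix `M_x(n; z)`. -/
noncomputable def Mmat (θ φ : ℝ) (x : ℤ → ℕ) (z : ℂ) (n : ℤ) : Matrix (Fin 2) (Fin 2) ℂ :=
  if x n = 0 then Amat φ z else Amat θ z

/-- Ordered product `M_x(m+k-1; z) ⋯ M_x(m+1; z) · M_x(m; z)`. -/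
noncomputable def Tprod (θ φ : ℝ) (x : ℤ → ℕ) (z : ℂ) (m : ℤ) : ℕ → Matrix (Fin 2) (Fin 2) ℂ
  | 0 => 1
  | k + 1 => Mmat θ φ x z (m + k) * Tprod θ φ x z m k

/-- The transfer matrix `T_x(n, m; z)`: for `n > m` the product
`M_x(n-1;z) ⋯ M_x(m;z)`, the identity for `n = m`, and `T_x(m,n;z)⁻¹` for `n < m`. -/
noncomputable def Tmat (θ φ : ℝ) (x : ℤ → ℕ) (z : ℂ) (n m : ℤ) : Matrix (Fin 2) (Fin 2) ℂ :=
  if m ≤ n then Tprod θ φ x z m (n - m).toNat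
  else (Tprod θ φ x z n (m - n).toNat)⁻¹

attribute [local instance] Matrix.instL2OpNormedAddCommGroup

theorem thueMorse_two_mul (n : ℕ) : thueMorse (2 * n) = thueMorse n := by
  rcases Nat.eq_zero_or_pos n with rfl | hn
  · rfl
  · simp [thueMorse, Nat.digits_base_mul one_lt_two hn]

theorem thueMorse_two_mul_add_one (n : ℕ) : thueMorse (2 * n + 1) = 1 - thueMorse n := by
  have h := Nat.digits_add_two_add_one 0 (2 * n)
  have h1 : (2 * n + 1) % 2 = 1 := by omega
  have h2 : (2 * n + 1) / 2 = n := by omega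
  simp only [Nat.zero_add, h1, h2] at h
  simp only [thueMorse, h, List.sum_cons]
  omega

theorem thueMorse_lt_two (n : ℕ) : thueMorse n < 2 := Nat.mod_lt _ two_pos

theorem thueMorse_thueMorse (n : ℕ) : thueMorse (thueMorse n) = thueMorse n := by
  have h := thueMorse_lt_two n
  interval_cases thueMorse n <;> simp [thueMorse]

theorem thueMorse_four_mul_add (q : ℕ) :
    thueMorse (4 * q) = thueMorse q ∧ thueMorse (4 * q + 1) = 1 - thueMorse q ∧
      thueMorse (4 * q + 2) = 1 - thueMorse q ∧ thueMorse (4 * q + 3) = thueMorse q := by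
  have h := thueMorse_lt_two q
  refine ⟨?_, ?_, ?_, ?_⟩
  · rw [show 4 * q = 2 * (2 * q) by ring, thueMorse_two_mul, thueMorse_two_mul]
  · rw [show 4 * q + 1 = 2 * (2 * q) + 1 by ring, thueMorse_two_mul_add_one, thueMorse_two_mul]
  · rw [show 4 * q + 2 = 2 * (2 * q + 1) by ring, thueMorse_two_mul, thueMorse_two_mul_add_one]
  · rw [show 4 * q + 3 = 2 * (2 * q + 1) + 1 by ring, thueMorse_two_mul_add_one,
      thueMorse_two_mul_add_one]
    omega

theorem Amat_I_mul_self {γ : ℝ} (h : Real.cos γ ≠ 0) :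
    Amat γ Complex.I * Amat γ Complex.I = -1 := by
  have hc : (Complex.cos γ) ≠ 0 := by exact_mod_cast h
  have hs := Complex.sin_sq_add_cos_sq γ
  ext i j
  fin_cases i <;> fin_cases j <;>
    simp [Amat, Matrix.mul_apply, Fin.sum_univ_two] <;> field_simp <;>
    first | ring1 | linear_combination hs + Complex.I_sq

/-- The product of the one-step matrices at `z = i` along the first `n` letters of the
Thue–Morse sequence. -/
noncomputable def tmPrefix (θ φ : ℝ) : ℕ → Matrix (Fin 2) (Fin 2) ℂ
  | 0 => 1
  | n + 1 => (if thueMorse n = 0 then Amat φ Complex.I else Amat θ Complex.I) * tmPrefix θ φ n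

section

variable {θ φ : ℝ}

theorem tmPrefix_four_mul (hθ : Real.cos θ ≠ 0) (hφ : Real.cos φ ≠ 0) (q : ℕ) :
    tmPrefix θ φ (4 * q) = 1 := by
  induction q with
  | zero => rfl
  | succ q ih =>
    obtain ⟨h0, h1, h2, h3⟩ := thueMorse_four_mul_add q
    have hA := Amat_I_mul_self hφ
    have hB := Amat_I_mul_self hθ
    have h := thueMorse_lt_two q
    rw [show 4 * (q + 1) = 4 * q + 3 + 1 by ring]
    simp only [tmPrefix, ih, h0, h1, h2, h3, mul_one]
    have key {X Y : Matrix (Fin 2) (Fin 2) ℂ} (hX : X * X = -1) (hY : Y * Y = -1) :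
        X * (Y * (Y * X)) = 1 := by
      rw [← mul_assoc Y, hY, neg_one_mul, mul_neg, hX, neg_neg]
    interval_cases thueMorse q
    · simpa using key hA hB
    · simpa using key hB hA

theorem exists_lt_eight_tmPrefix_eq (hθ : Real.cos θ ≠ 0) (hφ : Real.cos φ ≠ 0) (n : ℕ) :
    ∃ k < 8, tmPrefix θ φ n = tmPrefix θ φ k := by
  have h := thueMorse_lt_two (n / 4)
  refine ⟨4 * thueMorse (n / 4) + n % 4, by omega, ?_⟩
  nth_rw 1 [← Nat.div_add_mod n 4]
  obtain ⟨h0, h1, h2, -⟩ := thueMorse_four_mul_add (n / 4)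
  obtain ⟨k0, k1, k2, -⟩ := thueMorse_four_mul_add (thueMorse (n / 4))
  have hr : n % 4 < 4 := Nat.mod_lt _ (by norm_num)
  interval_cases n % 4 <;>
    simp only [tmPrefix, add_zero, tmPrefix_four_mul hθ hφ, h0, h1, h2, k0, k1, k2,
      thueMorse_thueMorse]

theorem isUnit_tmPrefix (hθ : Real.cos θ ≠ 0) (hφ : Real.cos φ ≠ 0) (n : ℕ) :
    IsUnit (tmPrefix θ φ n) := by
  have key {γ : ℝ} (h : Real.cos γ ≠ 0) : IsUnit (Amat γ Complex.I) :=
    IsUnit.of_mul_eq_one (-Amat γ Complex.I) (by rw [mul_neg, Amat_I_mul_self h, neg_neg])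
  induction n with
  | zero => exact isUnit_one
  | succ n ih =>
    refine IsUnit.mul ?_ ih
    split_ifs
    exacts [key hφ, key hθ]

theorem Tprod_mul_tmPrefix {x : ℤ → ℕ} {m : ℤ} {M : ℕ} (k : ℕ)
    (h : ∀ j < k, x (m + j) = thueMorse (M + j)) :
    Tprod θ φ x Complex.I m k * tmPrefix θ φ M = tmPrefix θ φ (M + k) := by
  induction k with
  | zero => simp [Tprod]
  | succ k ih =>
    rw [Tprod, mul_assoc, ih fun j hj => h j (by omega), Mmat, h k (by omega), ← add_assoc,
      tmPrefix]

theorem Tprod_eq_tmPrefix_mul_inv (hθ : Real.cos θ ≠ 0) (hφ : Real.cos φ ≠ 0) {x : ℤ → ℕ}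
    (hx : MemTMSubshift x) (m : ℤ) (k : ℕ) :
    ∃ a b, Tprod θ φ x Complex.I m k = tmPrefix θ φ a * (tmPrefix θ φ b)⁻¹ := by
  obtain ⟨M, hM⟩ := hx m k
  refine ⟨M + k, M, ?_⟩
  rw [← Tprod_mul_tmPrefix k fun j hj => hM j hj.le,
    Matrix.mul_nonsing_inv_cancel_right _ _
      ((Matrix.isUnit_iff_isUnit_det _).1 (isUnit_tmPrefix hθ hφ M))]

theorem Tmat_eq_tmPrefix_mul_inv (hθ : Real.cos θ ≠ 0) (hφ : Real.cos φ ≠ 0) {x : ℤ → ℕ}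
    (hx : MemTMSubshift x) (n m : ℤ) :
    ∃ a b, Tmat θ φ x Complex.I n m = tmPrefix θ φ a * (tmPrefix θ φ b)⁻¹ := by
  unfold Tmat
  split_ifs
  · exact Tprod_eq_tmPrefix_mul_inv hθ hφ hx _ _
  · obtain ⟨a, b, hab⟩ := Tprod_eq_tmPrefix_mul_inv hθ hφ hx n (m - n).toNat
    refine ⟨b, a, ?_⟩
    rw [hab, Matrix.mul_inv_rev, Matrix.nonsing_inv_nonsing_inv _
      ((Matrix.isUnit_iff_isUnit_det _).1 (isUnit_tmPrefix hθ hφ b))]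

end

/-- **Lemma (boundedness of Thue–Morse transfer matrices at `z = i`)**. -/
theorem tm_transfer_matrices_bounded_at_i (θ φ : ℝ)
    (hθ : θ ∈ Set.Ioo 0 (Real.pi / 2)) (hφ : φ ∈ Set.Ioo 0 (Real.pi / 2)) :
    ∃ c > 0, ∀ (n m : ℤ) (x : ℤ → ℕ), MemTMSubshift x →
      ‖Tmat θ φ x Complex.I n m‖ ≤ c := by
  have hθ' : Real.cos θ ≠ 0 :=
    (Real.cos_pos_of_mem_Ioo ⟨by linarith [hθ.1, Real.pi_pos], hθ.2⟩).ne'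
  have hφ' : Real.cos φ ≠ 0 :=
    (Real.cos_pos_of_mem_Ioo ⟨by linarith [hφ.1, Real.pi_pos], hφ.2⟩).ne'
  let f : ℕ × ℕ → ℝ := fun p => ‖tmPrefix θ φ p.1 * (tmPrefix θ φ p.2)⁻¹‖
  have hf : ∀ p, 0 ≤ f p := fun p => norm_nonneg _
  let S := Finset.range 8 ×ˢ Finset.range 8
  refine ⟨1 + ∑ p ∈ S, f p, by linarith [Finset.sum_nonneg fun p (_ : p ∈ S) => hf p], ?_⟩
  intro n m x hx
  obtain ⟨a, b, hab⟩ := Tmat_eq_tmPrefix_mul_inv hθ' hφ' hx n m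
  obtain ⟨a', ha, ha'⟩ := exists_lt_eight_tmPrefix_eq hθ' hφ' a
  obtain ⟨b', hb, hb'⟩ := exists_lt_eight_tmPrefix_eq hθ' hφ' b
  rw [hab, ha', hb']
  have hmem : (a', b') ∈ S := by simp [S, ha, hb]
  have hle : f (a', b') ≤ ∑ p ∈ S, f p := Finset.single_le_sum (fun p _ => hf p) hmem
  exact hle.trans (by linarith)
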